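/- Parametric objective monotonicity implies nestedness for set minimizers: Let V be a finite set and for each λ ∈ ℝ let g_λ : 𝒫(V) → ℝ be defined by g_λ(S) = f(S) − λ·h(S) where f : 𝒫(V) → ℝ is submodular and h : 𝒫(V) → ℝ is monotone non-decreasing (h(S) ≤ h(T) whenever S ⊆ T) and modular (h(S∪T)+h(S∩T)=h(S)+h(T)). If λ₁ < λ₂, S₁ minimizes g_{λ₁}, and S₂ minimizes g_{λ₂}, then S₁ ∩ S₂ minimizes g_{λ₁} and S₁ ∪ S₂ minimizes g_{λ₂}. -/

import Mathlib

/-!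
Write `g_c = f - c • h`. It is submodular, as `h` is modular, and for `c ≤ d` the increment
`g_d - g_c = -(d - c) • h` is antitone, so moving up from `b` to `a ⊔ b` costs no more under `g_d`
than under `g_c`. This gives the exchange inequality `g_c (a ⊓ b) + g_d (a ⊔ b) ≤ g_c a + g_d b`.
When `a` minimizes `g_c` and `b` minimizes `g_d`, each term on the left is at least the
corresponding term on the right, so equality holds in both.
-/

open Set

section Definitions

variable {α M : Type*} [Lattice α] [Add M]

/-- Submodularity of a function on a lattice; on the lattice of finite subsets this is the usual
notion for set functions. -/
def IsSubmodular [LE M] (f : α → M) : Prop :=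
  ∀ a b, f (a ⊔ b) + f (a ⊓ b) ≤ f a + f b

/-- Modularity of a function on a lattice (a valuation in the lattice-theoretic sense), not to be
confused with modularity of the lattice. No normalization at `⊥` is imposed. -/
def IsModular (h : α → M) : Prop :=
  ∀ a b, h (a ⊔ b) + h (a ⊓ b) = h a + h b

end Definitions

theorem IsModular.const_smul {α M R : Type*} [Lattice α] [AddZeroClass M] [DistribSMul R M]
    {h : α → M} (hh : IsModular h) (c : R) : IsModular (c • h) := fun a b ↦ by
  simp only [Pi.smul_apply, ← smul_add, hh a b]

section OrderedGroup

variable {α M : Type*} [Lattice α] [AddCommGroup M] [PartialOrder M] [IsOrderedAddMonoid M]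
  {f g₁ g₂ h : α → M} {a b : α}

theorem IsSubmodular.sub_isModular (hf : IsSubmodular f) (hh : IsModular h) :
    IsSubmodular (f - h) := fun a b ↦
  calc (f - h) (a ⊔ b) + (f - h) (a ⊓ b)
      = (f (a ⊔ b) + f (a ⊓ b)) - (h (a ⊔ b) + h (a ⊓ b)) := sub_add_sub_comm ..
    _ ≤ (f a + f b) - (h a + h b) := sub_le_sub (hf a b) (hh a b).ge
    _ = (f - h) a + (f - h) b := add_sub_add_comm ..

theorem IsSubmodular.inf_add_sup_le_of_antitone_sub (hg₁ : IsSubmodular g₁)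
    (hanti : Antitone (g₂ - g₁)) (a b : α) : g₁ (a ⊓ b) + g₂ (a ⊔ b) ≤ g₁ a + g₂ b := by
  have increment_le : g₂ (a ⊔ b) - g₁ (a ⊔ b) ≤ g₂ b - g₁ b := hanti le_sup_right
  calc g₁ (a ⊓ b) + g₂ (a ⊔ b)
      = (g₁ (a ⊔ b) + g₁ (a ⊓ b)) + (g₂ (a ⊔ b) - g₁ (a ⊔ b)) := by abel
    _ ≤ (g₁ a + g₁ b) + (g₂ b - g₁ b) := add_le_add (hg₁ a b) increment_le
    _ = g₁ a + g₂ b := by abel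

theorem IsSubmodular.isMinOn_inf_of_antitone_sub (hg₁ : IsSubmodular g₁)
    (hanti : Antitone (g₂ - g₁)) (ha : IsMinOn g₁ univ a) (hb : IsMinOn g₂ univ b) :
    IsMinOn g₁ univ (a ⊓ b) := by
  rw [isMinOn_univ_iff] at ha hb ⊢
  have inf_le : g₁ (a ⊓ b) ≤ g₁ a := le_of_add_le_add_right <|
    (hg₁.inf_add_sup_le_of_antitone_sub hanti a b).trans (add_le_add_right (hb (a ⊔ b)) _)
  exact fun x ↦ inf_le.trans (ha x)

theorem IsSubmodular.isMinOn_sup_of_antitone_sub (hg₁ : IsSubmodular g₁)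
    (hanti : Antitone (g₂ - g₁)) (ha : IsMinOn g₁ univ a) (hb : IsMinOn g₂ univ b) :
    IsMinOn g₂ univ (a ⊔ b) := by
  rw [isMinOn_univ_iff] at ha hb ⊢
  have sup_le : g₂ (a ⊔ b) ≤ g₂ b := le_of_add_le_add_left <|
    (hg₁.inf_add_sup_le_of_antitone_sub hanti a b).trans (add_le_add_left (ha (a ⊓ b)) _)
  exact fun x ↦ sup_le.trans (hb x)

end OrderedGroup

section Parametric

variable {α R M : Type*} [Ring R] [PartialOrder R] [IsOrderedAddMonoid R]
  [AddCommGroup M] [PartialOrder M] [IsOrderedAddMonoid M] [Module R M] [PosSMulMono R M]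
  {f h : α → M} {c d : R}

theorem antitone_sub_smul_sub_sub_smul [Preorder α] (f : α → M) (hh : Monotone h) (hcd : c ≤ d) :
    Antitone ((f - d • h) - (f - c • h)) := by
  have increment_eq : (f - d • h) - (f - c • h) = -((d - c) • h) := by
    rw [sub_sub_sub_cancel_left, sub_smul, neg_sub]
  rw [increment_eq]
  exact (hh.const_smul (sub_nonneg.2 hcd)).neg

theorem parametric_lattice_minimizers_general [Lattice α] {a b : α} (hf : IsSubmodular f)
    (hmono : Monotone h) (hmod : IsModular h) (hcd : c ≤ d)
    (ha : IsMinOn (f - c • h) univ a) (hb : IsMinOn (f - d • h) univ b) :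
    IsMinOn (f - c • h) univ (a ⊓ b) ∧ IsMinOn (f - d • h) univ (a ⊔ b) := by
  have hsub : IsSubmodular (f - c • h) := hf.sub_isModular (hmod.const_smul c)
  have hanti : Antitone ((f - d • h) - (f - c • h)) :=
    antitone_sub_smul_sub_sub_smul f hmono hcd
  exact ⟨hsub.isMinOn_inf_of_antitone_sub hanti ha hb,
    hsub.isMinOn_sup_of_antitone_sub hanti ha hb⟩

end Parametric

/-- Parametric minimizers are lattice-compatible: for a submodular `f` and a
monotone modular `h`, if λ₁ < λ₂, `S₁` minimizes `f − λ₁·h` and `S₂` minimizes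
`f − λ₂·h`, then `S₁ ∩ S₂` minimizes `f − λ₁·h` and `S₁ ∪ S₂` minimizes
`f − λ₂·h`. -/
theorem parametric_lattice_minimizers {V : Type*} [Fintype V] [DecidableEq V]
    (f h : Finset V → ℝ)
    (hsub : ∀ S T : Finset V, f (S ∪ T) + f (S ∩ T) ≤ f S + f T)
    (hmono : ∀ S T : Finset V, S ⊆ T → h S ≤ h T)
    (hmod : ∀ S T : Finset V, h (S ∪ T) + h (S ∩ T) = h S + h T)
    (lam₁ lam₂ : ℝ) (hlam : lam₁ < lam₂)
    (S₁ S₂ : Finset V)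
    (hS₁ : ∀ S : Finset V, f S₁ - lam₁ * h S₁ ≤ f S - lam₁ * h S)
    (hS₂ : ∀ S : Finset V, f S₂ - lam₂ * h S₂ ≤ f S - lam₂ * h S) :
    (∀ S : Finset V, f (S₁ ∩ S₂) - lam₁ * h (S₁ ∩ S₂) ≤ f S - lam₁ * h S)
    ∧ (∀ S : Finset V, f (S₁ ∪ S₂) - lam₂ * h (S₁ ∪ S₂) ≤ f S - lam₂ * h S) := by
  have hmin := parametric_lattice_minimizers_general hsub hmono hmod hlam.le
    (isMinOn_univ_iff.2 hS₁) (isMinOn_univ_iff.2 hS₂)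
  exact hmin.imp isMinOn_univ_iff.1 isMinOn_univ_iff.1
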